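/- arXiv:2403.01900 — 4 statements merged into one kernel-verified Lean document; each statement's English description precedes it below -/
import Mathlib

section
/- Fix p ∈ [1,∞], D, E ∈ ℕ₊, S, I, P, L > 0 with P < S. Let g : B̄_{S,I} → B̄_S satisfy sup_{(x,u)∈B̄_{S,I}} ‖g(x,u)‖_p ≤ P and assume that for every u ∈ B̄_I the map x ↦ g(x,u) is L-Lipschitz on B̄_S with respect to the p-norm metric. Let f : B̄_{S,I} → ℝ^D be any map with ε := sup_{(x,u)∈B̄_{S,I}} ‖g(x,u) − f(x,u)‖_p ≤ S − P. Then (i) f maps B̄_{S,I} into B̄_S, and (ii) for every T ∈ ℕ₊, every initial state x_init ∈ B̄_S and every input sequence u ∈ (B̄_I)^T, the state sequences (x(t)) and (y(t)) on t ∈ {−T+1,…,0} defined by x(−T) = y(−T) = x_init, x(t) = g(x(t−1), u(t)) and y(t) = f(y(t−1), u(t)), satisfy ‖x(t) − y(t)‖_p ≤ ε · Σ_{i=0}^{T−1} L^i for every t ∈ {−T+1,…,0}. -/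
/-!
`pnorm p` is the norm of Mathlib's `PiLp p`, so it is nonnegative and satisfies the triangle
inequality (`pnorm_sub_le_add`). Part (i) follows since `‖f‖ ≤ ‖g‖ + ‖g - f‖ ≤ P + ε ≤ S`. For (ii),
the trajectories `x` of `g` and `y` of `f` stay in the ball (`pnorm_traj_le`), so with `e k` the
distance between `x k` and `y k`, inserting `g (y k) (u k)` between `g (x k) (u k)` and
`f (y k) (u k)` gives `e (k + 1) ≤ L * e k + ε`. Hence `e k ≤ ε * ∑ i < k, L ^ i` by
induction, and the sum grows with `k`.
-/

open MeasureTheory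
open scoped ENNReal

/-- The `p`-norm on `ℝ^D`, for `p ∈ [1,∞]` (sup-norm when `p = ∞`). -/
noncomputable def pnorm (p : ℝ≥0∞) {D : ℕ} (x : Fin D → ℝ) : ℝ :=
  if p = ⊤ then ⨆ i, |x i| else (∑ i, |x i| ^ p.toReal) ^ (1 / p.toReal)

/-- `D^{1/p}`, with the convention `D^{1/∞} = 1`. -/
noncomputable def dpow (p : ℝ≥0∞) (D : ℕ) : ℝ :=
  if p = ⊤ then 1 else (D : ℝ) ^ (1 / p.toReal)

/-- Dot product on `ℝ^Q`. -/
noncomputable def dotp {Q : ℕ} (ω x : Fin Q → ℝ) : ℝ := ∑ i, ω i * x i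

/-- The seminorm `‖ω‖_B = sup_{x ∈ B} |ω·x|`. -/
noncomputable def normOn {Q : ℕ} (B : Set (Fin Q → ℝ)) (ω : Fin Q → ℝ) : ℝ :=
  ⨆ x ∈ B, |dotp ω x|

/-- Membership in the family `F¹_{N,M}` of real-valued bounded-parameter ReLU FNNs. -/
def memF1 (p : ℝ≥0∞) (D E N : ℕ) (M S I : ℝ)
    (f : (Fin D → ℝ) → (Fin E → ℝ) → ℝ) : Prop :=
  ∃ (a : Fin (4 * N) → ℝ) (b : Fin (4 * N) → Fin D → ℝ)
    (c : Fin (4 * N) → Fin E → ℝ) (d : Fin (4 * N) → ℝ) (e : ℝ),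
    (∀ n, |a n| ≤ 2 * Real.sqrt M) ∧
    (∀ n, normOn {x : Fin D → ℝ | pnorm p x ≤ S} (b n) ≤ Real.sqrt M) ∧
    (∀ n, normOn {u : Fin E → ℝ | pnorm p u ≤ I} (c n) ≤ Real.sqrt M) ∧
    (∀ n, |d n| ≤ 2 * Real.sqrt M) ∧
    |e| ≤ M ∧
    ∀ s u, f s u = (∑ n, a n * max 0 (dotp (b n) s + dotp (c n) u + d n)) + e

/-- Iterated state map: `traj h x0 u k` is the state after `k` steps starting
from `x0` and feeding inputs `u 0, u 1, …, u (k-1)`. -/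
def traj {X U : Type*} (h : X → U → X) (x0 : X) (u : ℕ → U) : ℕ → X
  | 0 => x0
  | k + 1 => h (traj h x0 u k) (u k)

/-- Identifies `pnorm` with the norm of `PiLp`, which supplies the triangle inequality
(Minkowski) for every `p ∈ [1,∞]`. -/
theorem pnorm_eq_norm (p : ℝ≥0∞) [Fact (1 ≤ p)] {D : ℕ} (x : Fin D → ℝ) :
    pnorm p x = ‖WithLp.toLp p x‖ := by
  unfold pnorm
  split_ifs with h
  · subst h
    simp [PiLp.norm_eq_ciSup]
  · have hp : 0 < p.toReal :=
      ENNReal.toReal_pos (zero_lt_one.trans_le Fact.out).ne' h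
    simp [PiLp.norm_eq_sum hp]

theorem pnorm_nonneg (p : ℝ≥0∞) (hp : 1 ≤ p) {D : ℕ} (x : Fin D → ℝ) : 0 ≤ pnorm p x := by
  have : Fact (1 ≤ p) := ⟨hp⟩
  rw [pnorm_eq_norm]
  exact norm_nonneg _

theorem pnorm_zero (p : ℝ≥0∞) (hp : 1 ≤ p) {D : ℕ} : pnorm p (0 : Fin D → ℝ) = 0 := by
  have : Fact (1 ≤ p) := ⟨hp⟩
  rw [pnorm_eq_norm, WithLp.toLp_zero, norm_zero]

theorem pnorm_sub_le_add (p : ℝ≥0∞) (hp : 1 ≤ p) {D : ℕ} (x y z : Fin D → ℝ) :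
    pnorm p (x - z) ≤ pnorm p (x - y) + pnorm p (y - z) := by
  have : Fact (1 ≤ p) := ⟨hp⟩
  simp only [pnorm_eq_norm, WithLp.toLp_sub]
  exact norm_sub_le_norm_sub_add_norm_sub _ _ _

theorem pnorm_le_add_sub (p : ℝ≥0∞) (hp : 1 ≤ p) {D : ℕ} (x y : Fin D → ℝ) :
    pnorm p y ≤ pnorm p x + pnorm p (x - y) := by
  have : Fact (1 ≤ p) := ⟨hp⟩
  simp only [pnorm_eq_norm, WithLp.toLp_sub]
  exact norm_le_norm_add_norm_sub _ _

/-- A state map that preserves the ball keeps its trajectories there, so the bounds assumed only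
on the ball apply at every step. -/
theorem pnorm_traj_le {p : ℝ≥0∞} {D E : ℕ} {S I : ℝ}
    {h : (Fin D → ℝ) → (Fin E → ℝ) → (Fin D → ℝ)}
    (hh : ∀ x, pnorm p x ≤ S → ∀ u, pnorm p u ≤ I → pnorm p (h x u) ≤ S)
    {x₀ : Fin D → ℝ} (hx₀ : pnorm p x₀ ≤ S) {u : ℕ → Fin E → ℝ} (hu : ∀ k, pnorm p (u k) ≤ I)
    (k : ℕ) : pnorm p (traj h x₀ u k) ≤ S := by
  induction k with
  | zero => exact hx₀
  | succ k ih => exact hh _ ih _ (hu k)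

/-- Internal approximation: a map `f` uniformly close to a domain-preserving
Lipschitz state map `g` is itself domain-preserving, and the induced
finite-length state filters are close. -/
theorem internal_approximation
    (p : ℝ≥0∞) (hp : 1 ≤ p) (D E : ℕ) (hD : 0 < D) (hE : 0 < E)
    (S I P L : ℝ) (hS : 0 < S) (hI : 0 < I) (hP : 0 < P) (hL : 0 < L) (hPS : P < S)
    (g f : (Fin D → ℝ) → (Fin E → ℝ) → (Fin D → ℝ))
    (hgS : ∀ x, pnorm p x ≤ S → ∀ u, pnorm p u ≤ I → pnorm p (g x u) ≤ S)
    (hgP : ∀ x, pnorm p x ≤ S → ∀ u, pnorm p u ≤ I → pnorm p (g x u) ≤ P)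
    (hgLip : ∀ u, pnorm p u ≤ I → ∀ x x', pnorm p x ≤ S → pnorm p x' ≤ S →
      pnorm p (g x u - g x' u) ≤ L * pnorm p (x - x'))
    (ε : ℝ)
    (hε : ∀ x, pnorm p x ≤ S → ∀ u, pnorm p u ≤ I → pnorm p (g x u - f x u) ≤ ε)
    (hεSP : ε ≤ S - P) :
    (∀ x, pnorm p x ≤ S → ∀ u, pnorm p u ≤ I → pnorm p (f x u) ≤ S) ∧
    ∀ T : ℕ, 0 < T → ∀ xinit : Fin D → ℝ, pnorm p xinit ≤ S →
      ∀ u : ℕ → Fin E → ℝ, (∀ k, pnorm p (u k) ≤ I) →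
        ∀ k, 1 ≤ k → k ≤ T →
          pnorm p (traj g xinit u k - traj f xinit u k) ≤
            ε * ∑ i ∈ Finset.range T, L ^ i := by
  have hf : ∀ x, pnorm p x ≤ S → ∀ u, pnorm p u ≤ I → pnorm p (f x u) ≤ S := by
    intro x hx u hu
    linarith [pnorm_le_add_sub p hp (g x u) (f x u), hgP x hx u hu, hε x hx u hu]
  refine ⟨hf, fun T _ xinit hxinit u hu k _ hkT => ?_⟩
  have hε0 : 0 ≤ ε := (pnorm_nonneg p hp _).trans (hε xinit hxinit (u 0) (hu 0))
  have key : ∀ k, pnorm p (traj g xinit u k - traj f xinit u k) ≤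
      ε * ∑ i ∈ Finset.range k, L ^ i := by
    intro k
    induction k with
    | zero => simp [traj, (pnorm_zero p hp).le]
    | succ k ih =>
      have hx := pnorm_traj_le hgS hxinit hu k
      have hy := pnorm_traj_le hf hxinit hu k
      rw [geom_sum_succ]
      calc pnorm p (g (traj g xinit u k) (u k) - f (traj f xinit u k) (u k))
          ≤ pnorm p (g (traj g xinit u k) (u k) - g (traj f xinit u k) (u k)) +
            pnorm p (g (traj f xinit u k) (u k) - f (traj f xinit u k) (u k)) :=
            pnorm_sub_le_add p hp _ _ _
        _ ≤ L * pnorm p (traj g xinit u k - traj f xinit u k) + ε :=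
            add_le_add (hgLip _ (hu k) _ _ hx hy) (hε _ hy _ (hu k))
        _ ≤ L * (ε * ∑ i ∈ Finset.range k, L ^ i) + ε := by gcongr
        _ = ε * (L * ∑ i ∈ Finset.range k, L ^ i + 1) := by ring
  refine (key k).trans (mul_le_mul_of_nonneg_left ?_ hε0)
  exact Finset.sum_le_sum_of_subset_of_nonneg (Finset.range_mono hkT)
    fun i _ _ => pow_nonneg hL.le i
end

section
/- Fix p ∈ [1,∞], D, E, T ∈ ℕ₊ and S, I > 0. Let g : B̄_S × B̄_I → B̄_S be uniformly state contracting with null sequence (Δ_t)_{t≥1}, and let x_init ∈ B̄_S. Then for every left-infinite input sequence u : ℤ_{≤0} → B̄_I, every state sequence x : ℤ_{≤0} → B̄_S of g for u (i.e., x(t) = g(x(t−1), u(t)) for all t ≤ 0), and every t ≤ 0, one has ‖x(t) − V_{g,x_init}((u(t−T+1),…,u(t)))_0‖_p < Δ_T. In other words, the output at each time of the order-T cascaded dynamical system of g with the readout extracting its last block approximates the left-infinite filter of g within error Δ_T. -/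
/-!
Any solution `x` satisfies `x t = traj g (x (t - T)) v T`, where `v` lists the inputs at times
`t - T + 1, …, t`. The cascade output is the trajectory driven by the same `v` from `xinit`, so the
two differ only in their initial states, and uniform state contraction bounds their distance by `Δ T`.
-/

open MeasureTheory
open scoped ENNReal

/-- Finite memory approximation: for a uniformly state contracting dynamical
system, the output of the order-`T` cascade (i.e. the state reached from
`x_init` through the latest `T` inputs) approximates the left-infinite filter of
the system within the null sequence value `Δ T`. -/
theorem finite_memory_approximation
    (p : ℝ≥0∞) (hp : 1 ≤ p) (D E T : ℕ) (hD : 0 < D) (hE : 0 < E) (hT : 0 < T)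
    (S I : ℝ) (hS : 0 < S) (hI : 0 < I)
    (g : (Fin D → ℝ) → (Fin E → ℝ) → (Fin D → ℝ))
    (hgS : ∀ x, pnorm p x ≤ S → ∀ u, pnorm p u ≤ I → pnorm p (g x u) ≤ S)
    (Δ : ℕ → ℝ) (hΔpos : ∀ t, 1 ≤ t → 0 < Δ t)
    (hΔ0 : Filter.Tendsto Δ Filter.atTop (nhds 0))
    (hcontr : ∀ T' : ℕ, 0 < T' → ∀ x x' : Fin D → ℝ, pnorm p x ≤ S → pnorm p x' ≤ S →
      ∀ v : ℕ → Fin E → ℝ, (∀ k, pnorm p (v k) ≤ I) →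
        pnorm p (traj g x v T' - traj g x' v T') < Δ T')
    (xinit : Fin D → ℝ) (hxinit : pnorm p xinit ≤ S) :
    ∀ u : ℤ → Fin E → ℝ, (∀ t, pnorm p (u t) ≤ I) →
      ∀ x : ℤ → Fin D → ℝ, (∀ t : ℤ, t ≤ 0 → pnorm p (x t) ≤ S) →
        (∀ t : ℤ, t ≤ 0 → x t = g (x (t - 1)) (u t)) →
        ∀ t : ℤ, t ≤ 0 →
          pnorm p (x t - traj g xinit (fun k => u (t - T + 1 + k)) T) < Δ T := by
  intro u hu x hx hxg t ht
  -- On the time window `t - T, …, t` the state sequence is a trajectory started at `x (t - T)`.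
  have key : ∀ k : ℕ, k ≤ T →
      x (t - T + k) = traj g (x (t - T)) (fun k => u (t - T + 1 + k)) k := by
    intro k
    induction k with
    | zero => intro _; simp [traj]
    | succ k ih =>
      intro hk
      have hstep := hxg (t - T + (k + 1 : ℕ)) (by omega)
      rw [hstep, traj, ← ih (by omega)]
      congr 2 <;> push_cast <;> ring
  have hxT := key T le_rfl
  rw [sub_add_cancel] at hxT
  rw [hxT]
  exact hcontr T hT _ _ (hx _ (by omega)) hxinit _ (fun _ => hu _)
end

section
/- Fix p ∈ [1,∞], D, E, T ∈ ℕ₊, D_out ∈ ℕ₊, S, I > 0 and x_init ∈ B̄_S. Let g₁, g₂ : B̄_S × B̄_I → B̄_S be any state maps and W₁, W₂ ∈ ℝ^{D_out×D} any linear readouts. Then: (i) for every left-infinite input u : ℤ_{≤0} → B̄_I, the order-T cascades c(g₁, x_init, T) and c(g₂, x_init, T) each have a unique state sequence, whose i-th block at time t equals V_{g_j, x_init}((u(t−i+1),…,u(t)))_0 for i = 1,…,T (echo state property of cascades); and (ii) sup over left-infinite inputs u and times t ≤ 0 of ‖W₁ V_{g₁,x_init}((u(t−T+1),…,u(t)))_0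 − W₂ V_{g₂,x_init}((u(t−T+1),…,u(t)))_0‖_p is at most sup over finite inputs v ∈ (B̄_I)^T and s ∈ {−T+1,…,0} of ‖W₁ V_{g₁,x_init}(v)_s − W₂ V_{g₂,x_init}(v)_s‖_p; i.e., the left-infinite filter error of the cascaded systems with readouts extracting the last block is bounded by the finite-length filter error of the original systems. -/
/-!
A cascade forgets everything older than `T` steps. Its block `0` is always driven from `x_init`, and
block `i` at time `t` applies `g` to block `i - 1` at time `t - 1`; hence by induction on `i` block
`i` at time `t` is the state reached from `x_init` by the last `i + 1` inputs
(`cascade_block_eq_traj`), which gives uniqueness. Conversely these finite-window states satisfy the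
update equation (`traj_windows_solve_cascade`), which gives existence.

In particular the last block at time `t` depends only on the window of the last `T` inputs. Such a
window is itself an admissible finite input, so the filter error of the cascades at time `t` is one
of the finite-length errors of the original systems, namely the one at the end of the window.
-/

open MeasureTheory
open scoped ENNReal

/-- The state map of the order-`T` cascade `c(g, x_init, T)`: block `0` is
driven from the frozen initial state `x_init`, and block `i` is driven from
block `i-1` of the previous state. -/
def cascade {D E : ℕ} (T : ℕ) (g : (Fin D → ℝ) → (Fin E → ℝ) → (Fin D → ℝ))
    (xinit : Fin D → ℝ) :
    (Fin T → Fin D → ℝ) → (Fin E → ℝ) → (Fin T → Fin D → ℝ) :=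
  fun X u i =>
    if (i : ℕ) = 0 then g xinit u
    else g (X ⟨(i : ℕ) - 1, Nat.lt_of_le_of_lt (Nat.sub_le _ 1) i.isLt⟩) u

/-- Block `i` of the cascade at time `t` is reached from `x_init` by the inputs
`u (t - i), …, u t`: this is the cascade update rule read off block by block. -/
theorem cascade_block_eq_traj {D E T : ℕ}
    (g : (Fin D → ℝ) → (Fin E → ℝ) → (Fin D → ℝ)) (xinit : Fin D → ℝ)
    (u : ℤ → Fin E → ℝ) (X : ℤ → Fin T → Fin D → ℝ)
    (hX : ∀ t : ℤ, t ≤ 0 → X t = cascade T g xinit (X (t - 1)) (u t))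
    (i : ℕ) (hi : i < T) (t : ℤ) (ht : t ≤ 0) :
    X t ⟨i, hi⟩ = traj g xinit (fun k => u (t - (i : ℤ) + k)) (i + 1) := by
  induction i generalizing t with
  | zero =>
    rw [hX t ht]
    simp [cascade, traj]
  | succ i ih =>
    rw [hX t ht, traj]
    -- The window `t - (i + 1) + k` ending at time `t` is `(t - 1) - i + k` seen from time `t - 1`.
    have hwin : (fun k : ℕ => u (t - 1 - (i : ℤ) + k)) =
        fun k : ℕ => u (t - ((i + 1 : ℕ) : ℤ) + k) := by
      funext k
      congr 1
      push_cast
      ring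
    rw [← hwin, ← ih (by omega) (t - 1) (by omega)]
    simp [cascade]

/-- The finite-memory filter solves the cascade equation, which gives existence of a state
sequence. -/
theorem traj_windows_solve_cascade {D E T : ℕ}
    (g : (Fin D → ℝ) → (Fin E → ℝ) → (Fin D → ℝ)) (xinit : Fin D → ℝ)
    (u : ℤ → Fin E → ℝ) (t : ℤ) :
    (fun j : Fin T => traj g xinit (fun k => u (t - ((j : ℕ) : ℤ) + k)) ((j : ℕ) + 1)) =
      cascade T g xinit
        (fun j : Fin T => traj g xinit (fun k => u (t - 1 - ((j : ℕ) : ℤ) + k)) ((j : ℕ) + 1))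
        (u t) := by
  funext ⟨j, hj⟩
  cases j with
  | zero => simp [cascade, traj]
  | succ i =>
    have hwin : (fun k : ℕ => u (t - ((i + 1 : ℕ) : ℤ) + k)) =
        fun k : ℕ => u (t - 1 - (i : ℤ) + k) := by
      funext k
      congr 1
      push_cast
      ring
    have hlast : u (t - 1 - (i : ℤ) + ((i + 1 : ℕ) : ℤ)) = u t := by
      congr 1
      push_cast
      ring
    simp only [cascade, hwin]
    rw [traj, hlast]
    simp

/-- (i) Order-`T` cascades have the echo state property, with the `i`-th block
of any state sequence equal to the length-`i` finite filter over the latest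
inputs; (ii) the left-infinite filter error between two cascaded systems with
last-block readouts is bounded by the finite-length filter error of the
original systems. -/
theorem cascade_esp_and_filter_error_reduction
    (p : ℝ≥0∞) (hp : 1 ≤ p) (D E T Dout : ℕ)
    (hD : 0 < D) (hE : 0 < E) (hT : 0 < T) (hDout : 0 < Dout)
    (S I : ℝ) (hS : 0 < S) (hI : 0 < I)
    (xinit : Fin D → ℝ) (hxinit : pnorm p xinit ≤ S)
    (g₁ g₂ : (Fin D → ℝ) → (Fin E → ℝ) → (Fin D → ℝ))
    (hg₁ : ∀ x, pnorm p x ≤ S → ∀ u, pnorm p u ≤ I → pnorm p (g₁ x u) ≤ S)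
    (hg₂ : ∀ x, pnorm p x ≤ S → ∀ u, pnorm p u ≤ I → pnorm p (g₂ x u) ≤ S)
    (W₁ W₂ : Matrix (Fin Dout) (Fin D) ℝ) :
    (∀ g : (Fin D → ℝ) → (Fin E → ℝ) → (Fin D → ℝ), g = g₁ ∨ g = g₂ →
      ∀ u : ℤ → Fin E → ℝ, (∀ t, pnorm p (u t) ≤ I) →
        (∃ X : ℤ → Fin T → Fin D → ℝ,
          ∀ t : ℤ, t ≤ 0 → X t = cascade T g xinit (X (t - 1)) (u t)) ∧
        (∀ X : ℤ → Fin T → Fin D → ℝ,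
          (∀ t : ℤ, t ≤ 0 → X t = cascade T g xinit (X (t - 1)) (u t)) →
          ∀ t : ℤ, t ≤ 0 → ∀ j : Fin T,
            X t j = traj g xinit (fun k => u (t - j + k)) ((j : ℕ) + 1))) ∧
    (∀ C : ℝ,
      (∀ v : ℕ → Fin E → ℝ, (∀ k, pnorm p (v k) ≤ I) →
        ∀ k, 1 ≤ k → k ≤ T →
          pnorm p (W₁.mulVec (traj g₁ xinit v k) - W₂.mulVec (traj g₂ xinit v k)) ≤ C) →
      ∀ u : ℤ → Fin E → ℝ, (∀ t, pnorm p (u t) ≤ I) →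
        ∀ t : ℤ, t ≤ 0 →
          pnorm p (W₁.mulVec (traj g₁ xinit (fun k => u (t - T + 1 + k)) T) -
              W₂.mulVec (traj g₂ xinit (fun k => u (t - T + 1 + k)) T)) ≤ C) := by
  refine ⟨fun g _ u _ => ⟨⟨_, fun t _ => traj_windows_solve_cascade g xinit u t⟩,
    fun X hX t ht j => cascade_block_eq_traj g xinit u X hX j j.isLt t ht⟩, ?_⟩
  intro C hC u hu t _
  exact hC _ (fun k => hu _) T hT le_rfl
end

section
/- Fix p ∈ [1,∞], D, E ∈ ℕ₊ and S, I > 0. Let g : B̄_S × B̄_I → B̄_S be continuous and suppose g has the echo state property: for every left-infinite input sequence u : ℤ_{≤0} → B̄_I there is exactly one state sequence x : ℤ_{≤0} → B̄_S with x(t) = g(x(t−1), u(t)) for all t ≤ 0. Then for every v₀ ∈ B̄_I, the map x ↦ g(x, v₀) has exactly one fixed point in B̄_S (existence follows from Brouwer's fixed-point theorem on the compact convex set B̄_S, and uniqueness from the echo state property applied to the constant input sequence). -/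
open MeasureTheory
open scoped ENNReal

/-- A continuous state map with the echo state property has, for every constant
input value, exactly one fixed point in the state ball. -/
theorem esp_unique_fixed_point
    (p : ℝ≥0∞) (hp : 1 ≤ p) (D E : ℕ) (hD : 0 < D) (hE : 0 < E)
    (S I : ℝ) (hS : 0 < S) (hI : 0 < I)
    (g : (Fin D → ℝ) → (Fin E → ℝ) → (Fin D → ℝ))
    (hgS : ∀ x, pnorm p x ≤ S → ∀ u, pnorm p u ≤ I → pnorm p (g x u) ≤ S)
    (hgcont : ContinuousOn (fun z : (Fin D → ℝ) × (Fin E → ℝ) => g z.1 z.2)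
      ({x : Fin D → ℝ | pnorm p x ≤ S} ×ˢ {u : Fin E → ℝ | pnorm p u ≤ I}))
    (hESP : ∀ u : ℤ → Fin E → ℝ, (∀ t, pnorm p (u t) ≤ I) →
      (∃ x : ℤ → Fin D → ℝ, (∀ t : ℤ, t ≤ 0 → pnorm p (x t) ≤ S) ∧
        (∀ t : ℤ, t ≤ 0 → x t = g (x (t - 1)) (u t))) ∧
      (∀ x y : ℤ → Fin D → ℝ,
        (∀ t : ℤ, t ≤ 0 → pnorm p (x t) ≤ S) →
        (∀ t : ℤ, t ≤ 0 → x t = g (x (t - 1)) (u t)) →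
        (∀ t : ℤ, t ≤ 0 → pnorm p (y t) ≤ S) →
        (∀ t : ℤ, t ≤ 0 → y t = g (y (t - 1)) (u t)) →
        ∀ t : ℤ, t ≤ 0 → x t = y t)) :
    ∀ v₀ : Fin E → ℝ, pnorm p v₀ ≤ I →
      ∃! x : Fin D → ℝ, pnorm p x ≤ S ∧ g x v₀ = x := by
  intro v₀ hv
  obtain ⟨⟨x, hxS, hx⟩, huniq⟩ := hESP (fun _ => v₀) fun _ => hv
  -- The shift of `x` by one time step is again a state sequence for the constant input, so
  -- uniqueness forces `x 0 = x (-1)`; this gives existence without Brouwer's theorem.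
  have hshift : x 0 = x (0 - 1) :=
    huniq x (fun t => x (t - 1)) hxS hx (fun t ht => hxS _ (by omega))
      (fun t ht => hx _ (by omega)) 0 le_rfl
  refine ⟨x 0, ⟨hxS 0 le_rfl, ?_⟩, ?_⟩
  · have h := hx 0 le_rfl
    rw [← hshift] at h
    exact h.symm
  · rintro y ⟨hyS, hy⟩
    exact huniq (fun _ => y) x (fun _ _ => hyS) (fun _ _ => hy.symm) hxS hx 0 le_rfl
end
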